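/- Let k ≥ 1 and n ≥ 64k⁶. If G has the maximum spectral radius among all simple graphs on n vertices containing no k pairwise edge-disjoint cycles (i.e., with φ ≤ k−1), then G has a dominating vertex and e(G) ≥ e(G') for every simple graph G' on n vertices that has a dominating vertex and contains no k pairwise edge-disjoint cycles. (In other words, every spectral-extremal graph is also edge-extremal among n-vertex graphs of maximum degree n−1 without k edge-disjoint cycles.) -/

import Mathlib

open scoped Classical

namespace PaperEDC

/-- `G` contains `m` pairwise edge-disjoint cycles. -/
def HasEDC {V : Type*} (G : SimpleGraph V) (m : ℕ) : Prop :=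
  ∃ c : Fin m → Σ v : V, G.Walk v v,
    (∀ i, (c i).2.IsCycle) ∧
    ∀ i j, i ≠ j → ∀ e ∈ (c i).2.edges, e ∉ (c j).2.edges

/-- `φ(G)`: the maximum number of pairwise edge-disjoint cycles in `G`. -/
noncomputable def phi {V : Type*} (G : SimpleGraph V) : ℕ := sSup {m | HasEDC G m}

/-- `K₁ ∇ H`: the join of a single new vertex with `H`. -/
def joinK1 {V : Type*} (H : SimpleGraph V) : SimpleGraph (Option V) :=
  SimpleGraph.fromRel fun a b => a = none ∨ ∃ u v, a = some u ∧ b = some v ∧ H.Adj u v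

/-- `t(G)`: the number of triangles of `G`. -/
noncomputable def triCount {V : Type*} (G : SimpleGraph V) : ℕ :=
  Nat.card {s : Finset V // G.IsNClique 3 s}

/-- A triangle-cactus: a connected graph in which every edge lies on a cycle and every
cycle is a triangle. -/
def IsTriangleCactus {V : Type*} (G : SimpleGraph V) : Prop :=
  G.Connected ∧
  (∀ e ∈ G.edgeSet, ∃ (v : V) (w : G.Walk v v), w.IsCycle ∧ e ∈ w.edges) ∧
  ∀ (v : V) (w : G.Walk v v), w.IsCycle → w.length = 3

/-- `e(G)`: the number of edges of `G`. -/
noncomputable def ecard {V : Type*} (G : SimpleGraph V) : ℕ := Nat.card G.edgeSet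

/-- `ρ(G)`: the spectral radius (largest adjacency eigenvalue) of `G`. -/
noncomputable def specRad {V : Type*} [Fintype V] (G : SimpleGraph V) : ℝ :=
  sSup {x : ℝ | ∃ f : V → ℝ, f ≠ 0 ∧ ∀ v : V, ∑ u : V, (if G.Adj v u then f u else 0) = x * f v}

/-!
Let `ρ` be the spectral radius of an extremal graph `G`, and let `K = 2k - 1`. Without `k`
edge-disjoint cycles, two vertices have at most `K` common neighbors, and deleting the edges of
`k - 1` cycles leaves a spanning forest `F` whose spectral radius is at least `ρ - 2(k - 1)`; the
star shows `√(n - 1) ≤ ρ`. Since `ρ(F)` is close to `√(n - 1)`, expressing `ρ(F)²` through the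
two-step walks from the maximal entry `u` of its Perron vector shows that `u` has only
`O(k √n)` non-neighbors.

All entries of the Perron vector of `G` other than that at `u` are then `O(1 / ρ)` relative to it.
Rehanging every non-neighbor of `u` as a pendant vertex at `u` creates no new cycle, and it would
increase the spectral radius if there were any non-neighbor, so `u` is dominating.

For a graph with a dominating vertex and `h` further edges, `ρ (ρ² - (n - 1))` is at least `2h`,
and `(ρ - K) (ρ² - (n - 1))` is at most `2h`. As `h = O(k²)` while `ρ` has order at least `k³`, a
larger value of `h` forces a larger spectral radius.
-/

section CycleFamilies

open Finset SimpleGraph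

variable {V : Type*} {G H : SimpleGraph V} {k m : ℕ} {u v w : V}

lemma hasEDC_zero : HasEDC G 0 :=
  ⟨fun i => i.elim0, fun i => i.elim0, fun i => i.elim0⟩

lemma HasEDC.anti (h : HasEDC G m) (hkm : k ≤ m) : HasEDC G k := by
  obtain ⟨c, hcycle, hdisj⟩ := h
  exact ⟨fun i => c (Fin.castLE hkm i), fun i => hcycle _, fun i j hij =>
    hdisj _ _ fun h => hij (Fin.castLE_injective hkm h)⟩

lemma HasEDC.transfer (h : HasEDC G m)
    (hGH : ∀ v (c : G.Walk v v), c.IsCycle → ∀ e ∈ c.edges, e ∈ H.edgeSet) : HasEDC H m := by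
  obtain ⟨c, hcycle, hdisj⟩ := h
  refine ⟨fun i => ⟨(c i).1, (c i).2.transfer H (hGH _ _ (hcycle i))⟩,
    fun i => (hcycle i).transfer _, fun i j hij => ?_⟩
  simpa only [Walk.edges_transfer] using hdisj i j hij

lemma HasEDC.succ_of_isCycle {C : G.Walk v v} (hC : C.IsCycle)
    (h : HasEDC (G.deleteEdges C.edgeSet) m) : HasEDC G (m + 1) := by
  obtain ⟨c, hcycle, hdisj⟩ := h
  have hle : G.deleteEdges C.edgeSet ≤ G := G.deleteEdges_le _
  have hC_disj : ∀ i, ∀ e ∈ (c i).2.edges, e ∉ C.edges := fun i e he hCe => by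
    have := (c i).2.edges_subset_edgeSet he
    rw [edgeSet_deleteEdges] at this
    exact this.2 hCe
  simp only [← Walk.edges_mapLe_eq_edges (h := hle)] at hC_disj hdisj
  refine ⟨Fin.cons ⟨v, C⟩ fun i => ⟨(c i).1, (c i).2.mapLe hle⟩,
    Fin.cases hC fun i => (hcycle i).mapLe hle, fun i j => ?_⟩
  refine Fin.cases (Fin.cases ?_ (fun j => ?_) j) (fun i => Fin.cases ?_ (fun j => ?_) j) i
  · exact fun h => absurd rfl h
  · exact fun _ e hCe he => hC_disj j e he hCe
  · exact fun _ e he => hC_disj i e he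
  · exact fun hij => hdisj i j (mt (congrArg Fin.succ) hij)

lemma exists_mem_edges_of_isCycle {C : G.Walk v v} (hC : C.IsCycle) : ∃ e, e ∈ C.edges :=
  List.exists_mem_of_length_pos (by
    rw [C.length_edges]
    exact three_pos.trans_le hC.three_le_length)

lemma bddAbove_hasEDC [Finite V] (G : SimpleGraph V) : BddAbove {m | HasEDC G m} := by
  refine ⟨Nat.card (Sym2 V), ?_⟩
  rintro m ⟨c, hcycle, hdisj⟩
  choose e he using fun i => exists_mem_edges_of_isCycle (hcycle i)
  have he_inj : Function.Injective e := fun i j hij => by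
    by_contra hne
    exact hdisj i j hne (e i) (he i) (hij ▸ he j)
  simpa using Nat.card_le_card_of_injective e he_inj

lemma phi_lt_iff [Finite V] : phi G < k ↔ ¬ HasEDC G k := by
  have hphi : HasEDC G (phi G) :=
    Nat.sSup_mem (s := {m | HasEDC G m}) ⟨0, hasEDC_zero⟩ (bddAbove_hasEDC G)
  refine ⟨fun hlt h => hlt.not_ge (le_csSup (bddAbove_hasEDC G) h), fun h => ?_⟩
  by_contra! hle
  exact h (hphi.anti hle)

lemma not_hasEDC_of_isAcyclic (hG : G.IsAcyclic) (hk : k ≠ 0) : ¬ HasEDC G k :=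
  fun ⟨_, hcycle, _⟩ => hG _ (hcycle ⟨0, Nat.pos_of_ne_zero hk⟩)

lemma exists_isCycle_of_triangle {a b : V} (hua : G.Adj u a) (hab : G.Adj a b)
    (hbu : G.Adj b u) : ∃ C : G.Walk u u, C.IsCycle ∧ C.edges = [s(u, a), s(a, b), s(b, u)] := by
  refine ⟨.cons hua (.cons hab (.cons hbu .nil)), ?_, rfl⟩
  have := hua.ne
  have := hab.ne
  have := hbu.ne
  simp only [Walk.cons_isCycle_iff, Walk.cons_isPath_iff, Walk.isPath_iff_nil, Walk.nil_nil,
    Walk.edges_cons, Walk.edges_nil, Walk.support_cons, Walk.support_nil, List.mem_cons,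
    List.not_mem_nil, Sym2.eq_iff]
  grind

lemma exists_isCycle_of_common_neighbors {a b : V} (huw : u ≠ w) (hab : a ≠ b)
    (ha : G.Adj u a ∧ G.Adj w a) (hb : G.Adj u b ∧ G.Adj w b) :
    ∃ C : G.Walk u u, C.IsCycle ∧ C.edges = [s(u, a), s(a, w), s(w, b), s(b, u)] := by
  refine ⟨.cons ha.1 (.cons ha.2.symm (.cons hb.2 (.cons hb.1.symm .nil))), ?_, rfl⟩
  have := ha.1.ne
  have := ha.2.ne
  have := hb.1.ne
  have := hb.2.ne
  simp only [Walk.cons_isCycle_iff, Walk.cons_isPath_iff, Walk.isPath_iff_nil, Walk.nil_nil,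
    Walk.edges_cons, Walk.edges_nil, Walk.support_cons, Walk.support_nil, List.mem_cons,
    List.not_mem_nil, Sym2.eq_iff]
  grind

lemma hasEDC_of_two_mul_le_card (huw : u ≠ w) {T : Finset V}
    (hT : ∀ v ∈ T, G.Adj u v ∧ G.Adj w v) (hm : 2 * m ≤ #T) : HasEDC G m := by
  induction m generalizing G T with
  | zero => exact hasEDC_zero
  | succ m ih =>
    obtain ⟨a, ha, b, hb, hab⟩ := one_lt_card.1 (show 1 < #T by omega)
    obtain ⟨C, hC, hCe⟩ := exists_isCycle_of_common_neighbors huw hab (hT a ha) (hT b hb)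
    refine .succ_of_isCycle hC (ih (T := (T.erase a).erase b) (fun v hv => ?_) ?_)
    · simp only [mem_erase] at hv
      have hv_adj := hT v hv.2.2
      have := hv_adj.1.ne
      have := hv_adj.2.ne
      simp only [deleteEdges_adj, Walk.mem_edgeSet, hCe, List.mem_cons,
        List.not_mem_nil, Sym2.eq_iff]
      grind
    · rw [card_erase_of_mem (mem_erase.2 ⟨hab.symm, hb⟩), card_erase_of_mem ha]
      omega

lemma exists_cover_of_not_hasEDC (hG : ¬ HasEDC G k) (u : V) :
    ∃ S : Finset V, #S + 2 ≤ 2 * k ∧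
      ∀ a b, G.Adj u a → G.Adj u b → G.Adj a b → a ∈ S ∨ b ∈ S := by
  induction k generalizing G with
  | zero => exact absurd hasEDC_zero hG
  | succ k ih =>
    by_cases htri : ∃ a b, G.Adj u a ∧ G.Adj u b ∧ G.Adj a b
    · obtain ⟨a, b, hua, hub, hab⟩ := htri
      obtain ⟨C, hC, hCe⟩ := exists_isCycle_of_triangle hua hab hub.symm
      obtain ⟨S, hS, hcover⟩ := ih (mt (HasEDC.succ_of_isCycle hC) hG)
      refine ⟨insert a (insert b S), ?_, fun a' b' hua' hub' hab' => ?_⟩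
      · have := card_insert_le a (insert b S)
        have := card_insert_le b S
        omega
      · have := hua'.ne
        have := hub'.ne
        have := hcover a' b'
        simp only [deleteEdges_adj, Walk.mem_edgeSet, hCe, List.mem_cons,
          List.not_mem_nil, Sym2.eq_iff] at this
        simp only [mem_insert]
        grind
    · push Not at htri
      exact ⟨∅, by simp, fun a b hua hub hab => absurd hab (htri a b hua hub)⟩

end CycleFamilies

section SpectralRadius

open SimpleGraph Matrix

variable {V : Type*} [Fintype V] {G H : SimpleGraph V} [DecidableRel G.Adj]
  [DecidableRel H.Adj] {μ : ℝ} {x : V → ℝ}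

lemma specRad_eq_sSup_spectrum : specRad G = sSup (spectrum ℝ (G.adjMatrix ℝ)) := by
  rw [specRad]
  congr 1
  ext μ
  rw [← spectrum_toLin', ← Module.End.hasEigenvalue_iff_mem_spectrum]
  simp only [Set.mem_ofPred_eq, Module.End.HasEigenvalue, Module.End.HasUnifEigenvalue,
    Submodule.ne_bot_iff, Module.End.mem_genEigenspace_one, toLin'_apply, funext_iff,
    adjMatrix_mulVec_apply, neighborFinset_eq_filter, Finset.sum_filter, Pi.smul_apply,
    smul_eq_mul, Pi.zero_apply, ne_eq]
  exact exists_congr fun f => and_comm.trans (by congr!)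

lemma posSemidef_specRad_sub_adjMatrix :
    (algebraMap ℝ (Matrix V V ℝ) (specRad G) - G.adjMatrix ℝ).PosSemidef := by
  rw [posSemidef_iff_isHermitian_and_spectrum_nonneg, ← spectrum.singleton_sub_eq]
  constructor
  · rw [algebraMap_eq_diagonal]
    exact (isHermitian_diagonal _).sub (G.isHermitian_adjMatrix ℝ)
  · rintro _ ⟨_, rfl, μ, hμ, rfl⟩
    rw [specRad_eq_sSup_spectrum]
    exact sub_nonneg.2 (le_csSup finite_real_spectrum.bddAbove hμ)

lemma dotProduct_specRad_sub_adjMatrix (x : V → ℝ) :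
    x ⬝ᵥ (algebraMap ℝ (Matrix V V ℝ) (specRad G) - G.adjMatrix ℝ) *ᵥ x =
      specRad G * (x ⬝ᵥ x) - x ⬝ᵥ G.adjMatrix ℝ *ᵥ x := by
  rw [sub_mulVec, dotProduct_sub, Algebra.algebraMap_eq_smul_one, smul_mulVec, one_mulVec,
    dotProduct_smul, smul_eq_mul]

lemma dotProduct_adjMatrix_mulVec_le_specRad (x : V → ℝ) :
    x ⬝ᵥ G.adjMatrix ℝ *ᵥ x ≤ specRad G * (x ⬝ᵥ x) := by
  have := posSemidef_specRad_sub_adjMatrix.dotProduct_mulVec_nonneg (M := _ - G.adjMatrix ℝ) x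
  rwa [star_trivial, dotProduct_specRad_sub_adjMatrix, sub_nonneg] at this

/-- A nonnegative eigenvector of the adjacency matrix of `G`, such as a Perron vector. -/
structure IsNonnegEigenvector (G : SimpleGraph V) [DecidableRel G.Adj] (μ : ℝ) (x : V → ℝ) :
    Prop where
  nonneg : ∀ v, 0 ≤ x v
  ne_zero : x ≠ 0
  mulVec_eq : G.adjMatrix ℝ *ᵥ x = μ • x

lemma adjMatrix_mulVec_eq_of_le_dotProduct
    (h : specRad G * (x ⬝ᵥ x) ≤ x ⬝ᵥ G.adjMatrix ℝ *ᵥ x) :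
    G.adjMatrix ℝ *ᵥ x = specRad G • x := by
  have hzero : star x ⬝ᵥ (algebraMap ℝ (Matrix V V ℝ) (specRad G) - G.adjMatrix ℝ) *ᵥ x = 0 := by
    rw [star_trivial, dotProduct_specRad_sub_adjMatrix]
    linarith [dotProduct_adjMatrix_mulVec_le_specRad (G := G) x]
  have := (posSemidef_specRad_sub_adjMatrix.dotProduct_mulVec_zero_iff x).1 hzero
  rw [sub_mulVec, Algebra.algebraMap_eq_smul_one, smul_mulVec, one_mulVec, sub_eq_zero] at this
  exact this.symm

lemma exists_adjMatrix_mulVec_eq_specRad_smul [Nonempty V] :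
    ∃ x : V → ℝ, x ≠ 0 ∧ G.adjMatrix ℝ *ᵥ x = specRad G • x := by
  have hspec : (spectrum ℝ (G.adjMatrix ℝ)).Nonempty := by
    rw [(G.isHermitian_adjMatrix ℝ).spectrum_real_eq_range_eigenvalues]
    exact Set.range_nonempty _
  have hmem := hspec.csSup_mem finite_real_spectrum
  rw [← specRad_eq_sSup_spectrum, ← spectrum_toLin', ← Module.End.hasEigenvalue_iff_mem_spectrum]
    at hmem
  obtain ⟨x, hx⟩ := hmem.exists_hasEigenvector
  exact ⟨x, hx.2, by simpa using hx.apply_eq_smul⟩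

lemma dotProduct_adjMatrix_mulVec_le_abs (x : V → ℝ) :
    x ⬝ᵥ G.adjMatrix ℝ *ᵥ x ≤ |x| ⬝ᵥ G.adjMatrix ℝ *ᵥ |x| := by
  simp only [dotProduct, adjMatrix_mulVec_apply, Finset.mul_sum, Pi.abs_apply, ← abs_mul]
  gcongr
  exact le_abs_self _

lemma exists_isNonnegEigenvector_specRad [Nonempty V] :
    ∃ x, IsNonnegEigenvector G (specRad G) x := by
  obtain ⟨f, hf0, hf⟩ := exists_adjMatrix_mulVec_eq_specRad_smul (G := G)
  refine ⟨|f|, fun v => abs_nonneg _, fun h => hf0 (funext fun v => abs_eq_zero.1 (congrFun h v)),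
    adjMatrix_mulVec_eq_of_le_dotProduct ?_⟩
  calc specRad G * (|f| ⬝ᵥ |f|) = f ⬝ᵥ G.adjMatrix ℝ *ᵥ f := by
        rw [hf, dotProduct_smul, smul_eq_mul]
        simp only [dotProduct, Pi.abs_apply, abs_mul_abs_self]
    _ ≤ |f| ⬝ᵥ G.adjMatrix ℝ *ᵥ |f| := dotProduct_adjMatrix_mulVec_le_abs f

lemma dotProduct_adjMatrix_mulVec_le_of_degree_le {d : ℕ} (hd : ∀ v, G.degree v ≤ d)
    (x : V → ℝ) : x ⬝ᵥ G.adjMatrix ℝ *ᵥ x ≤ d * (x ⬝ᵥ x) := by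
  have hlap : 0 ≤ x ⬝ᵥ G.lapMatrix ℝ *ᵥ x := by
    simpa only [star_trivial] using (G.posSemidef_lapMatrix ℝ).dotProduct_mulVec_nonneg x
  rw [lapMatrix, sub_mulVec, dotProduct_sub, dotProduct_mulVec_degMatrix, sub_nonneg] at hlap
  refine hlap.trans ?_
  simp only [dotProduct, Finset.mul_sum, mul_assoc]
  gcongr with v
  · exact mul_self_nonneg _
  · exact hd v

lemma specRad_le_specRad_sdiff_add [Nonempty V] {G : SimpleGraph V} {d : ℕ} (hHG : H ≤ G)
    (hd : ∀ v, H.degree v ≤ d) : specRad G ≤ specRad (G \ H) + d := by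
  obtain ⟨x, hx0, hx⟩ := exists_adjMatrix_mulVec_eq_specRad_smul (G := G)
  have hsplit : G.adjMatrix ℝ = (G \ H).adjMatrix ℝ + H.adjMatrix ℝ := by
    ext a b
    have := @hHG a b
    by_cases hG : G.Adj a b <;> by_cases hH : H.Adj a b <;> simp_all
  refine le_of_mul_le_mul_right ?_ (dotProduct_self_star_pos_iff.2 hx0)
  rw [star_trivial]
  calc specRad G * (x ⬝ᵥ x) = x ⬝ᵥ G.adjMatrix ℝ *ᵥ x := by rw [hx, dotProduct_smul, smul_eq_mul]
    _ = x ⬝ᵥ (G \ H).adjMatrix ℝ *ᵥ x + x ⬝ᵥ H.adjMatrix ℝ *ᵥ x := by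
        rw [hsplit, add_mulVec, dotProduct_add]
    _ ≤ (specRad (G \ H) + d) * (x ⬝ᵥ x) := by
        rw [add_mul]
        exact add_le_add (dotProduct_adjMatrix_mulVec_le_specRad x)
          (dotProduct_adjMatrix_mulVec_le_of_degree_le hd x)

lemma degree_fromEdgeSet_le_two {G : SimpleGraph V} {v : V} {C : G.Walk v v} (hC : C.IsCycle)
    [DecidableRel (fromEdgeSet C.edgeSet).Adj] (a : V) :
    (fromEdgeSet C.edgeSet).degree a ≤ 2 := by
  have hsub : (fromEdgeSet C.edgeSet).neighborSet a ⊆ C.toSubgraph.neighborSet a := fun b hb =>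
    (C.adj_toSubgraph_iff_mem_edges).2 ((fromEdgeSet_adj _).1 hb).1
  rw [← card_neighborSet_eq_degree, Fintype.card_eq_nat_card, Nat.card_coe_set_eq]
  refine (Set.ncard_le_ncard hsub).trans ?_
  by_cases ha : a ∈ C.support
  · exact (hC.ncard_neighborSet_toSubgraph_eq_two ha).le
  · have hempty : C.toSubgraph.neighborSet a = ∅ :=
      Set.eq_empty_of_forall_notMem fun b hb => ha (C.mem_verts_toSubgraph.1 hb.fst_mem)
    simp [hempty]

lemma exists_isAcyclic_le_specRad [Nonempty V] {G : SimpleGraph V} {k : ℕ}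
    (hG : ¬ HasEDC G k) :
    ∃ F ≤ G, F.IsAcyclic ∧ specRad G + 2 ≤ specRad F + 2 * k := by
  induction k generalizing G with
  | zero => exact absurd hasEDC_zero hG
  | succ k ih =>
    by_cases hacyclic : G.IsAcyclic
    · refine ⟨G, le_rfl, hacyclic, ?_⟩
      push_cast
      linarith [Nat.cast_nonneg (α := ℝ) k]
    · simp only [IsAcyclic, not_forall, not_not] at hacyclic
      obtain ⟨v, C, hC⟩ := hacyclic
      obtain ⟨F, hFG, hF, hle⟩ := ih (mt (HasEDC.succ_of_isCycle hC) hG)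
      refine ⟨F, hFG.trans (G.deleteEdges_le _), hF, ?_⟩
      have hCG : fromEdgeSet C.edgeSet ≤ G := fun a b hab =>
        C.adj_of_mem_edges ((fromEdgeSet_adj _).1 hab).1
      have hdrop := specRad_le_specRad_sdiff_add hCG (degree_fromEdgeSet_le_two hC)
      rw [← deleteEdges] at hdrop
      push_cast at hdrop ⊢
      linarith

end SpectralRadius

section Codegree

open Finset SimpleGraph

variable {V : Type*} [Fintype V] {G : SimpleGraph V} [DecidableRel G.Adj]

/-- The number of common neighbors of `u` and `v`; for `u = v` it is the degree. -/
noncomputable def codegree (G : SimpleGraph V) [DecidableRel G.Adj] (u v : V) : ℕ :=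
  #(G.neighborFinset u ∩ G.neighborFinset v)

lemma codegree_self (u : V) : codegree G u u = G.degree u := by
  rw [codegree, inter_self, card_neighborFinset_eq_degree]

lemma codegree_lt_of_not_hasEDC {k : ℕ} (hG : ¬ HasEDC G k) {u v : V} (huv : u ≠ v) :
    codegree G u v < 2 * k := by
  by_contra! hle
  refine hG (hasEDC_of_two_mul_le_card huv (fun w hw => ?_) hle)
  simpa only [mem_inter, mem_neighborFinset] using hw

lemma codegree_le_one_of_isAcyclic (hG : G.IsAcyclic) {u v : V} (huv : u ≠ v) :
    codegree G u v ≤ 1 :=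
  Nat.lt_succ_iff.1 (codegree_lt_of_not_hasEDC (not_hasEDC_of_isAcyclic hG one_ne_zero) huv)

lemma codegree_eq_zero_of_isAcyclic (hG : G.IsAcyclic) {u v : V} (huv : G.Adj u v) :
    codegree G u v = 0 := by
  refine card_eq_zero.2 (eq_empty_of_forall_notMem fun w hw => ?_)
  simp only [mem_inter, mem_neighborFinset] at hw
  obtain ⟨C, hC, -⟩ := exists_isCycle_of_triangle huv hw.2 hw.1.symm
  exact hG C hC

variable {M : Type*} [AddCommMonoid M]

lemma sum_sum_neighborFinset (u : V) (f : V → M) :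
    ∑ v ∈ G.neighborFinset u, ∑ w ∈ G.neighborFinset v, f w = ∑ w, codegree G u w • f w := by
  rw [sum_comm' (t' := univ) (s' := fun w => G.neighborFinset u ∩ G.neighborFinset w)]
  · simp only [sum_const, codegree]
  · simp only [mem_inter, mem_neighborFinset, mem_univ, and_true, G.adj_comm, implies_true]

lemma sum_eq_add_sum_neighborFinset_add_sum_compl (u : V) (f : V → M) :
    ∑ v, f v = f u + ∑ v ∈ G.neighborFinset u, f v + ∑ v ∈ Gᶜ.neighborFinset u, f v := by
  rw [← sum_add_sum_compl (G.neighborFinset u), neighborFinset_compl,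
    ← sum_sdiff (s₁ := {u}) (s₂ := (G.neighborFinset u)ᶜ) (by simp), sum_singleton]
  abel

lemma sum_neighborFinset_of_not_adj {u v : V} (huv : ¬ G.Adj u v) (f : V → M) :
    ∑ w ∈ G.neighborFinset v, f w = ∑ w ∈ G.neighborFinset u ∩ G.neighborFinset v, f w +
      ∑ w ∈ G.neighborFinset v ∩ Gᶜ.neighborFinset u, f w := by
  have hsdiff : G.neighborFinset v ∩ Gᶜ.neighborFinset u =
      G.neighborFinset v \ G.neighborFinset u := by
    ext w
    simp only [mem_inter, mem_sdiff, mem_neighborFinset, compl_adj]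
    have : u = w → ¬ G.Adj v w := by rintro rfl; exact fun h => huv h.symm
    tauto
  rw [hsdiff, inter_comm, sum_inter_add_sum_sdiff]

lemma degree_eq_of_not_adj {u v : V} (huv : ¬ G.Adj u v) :
    G.degree v = codegree G u v + #(G.neighborFinset v ∩ Gᶜ.neighborFinset u) := by
  simpa only [codegree, ← card_neighborFinset_eq_degree, card_eq_sum_ones] using
    sum_neighborFinset_of_not_adj huv fun _ => (1 : ℕ)

lemma degree_add_degree_compl (u : V) : G.degree u + Gᶜ.degree u + 1 = Fintype.card V := by
  have := G.degree_lt_card_verts u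
  rw [degree_compl]
  omega

end Codegree

section Forest

open Finset SimpleGraph

variable {V : Type*} [Fintype V] {G F : SimpleGraph V} [DecidableRel G.Adj] [DecidableRel F.Adj]
  {μ : ℝ} {x : V → ℝ} {u w : V}

namespace IsNonnegEigenvector

lemma sum_neighborFinset (hx : IsNonnegEigenvector G μ x) (v : V) :
    ∑ w ∈ G.neighborFinset v, x w = μ * x v := by
  rw [← adjMatrix_mulVec_apply, hx.mulVec_eq, Pi.smul_apply, smul_eq_mul]

lemma sq_mul_eq_sum_codegree (hx : IsNonnegEigenvector G μ x) (u : V) :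
    μ ^ 2 * x u = ∑ w, codegree G u w * x w := by
  simp only [← nsmul_eq_mul, ← sum_sum_neighborFinset, hx.sum_neighborFinset, ← mul_sum]
  ring

lemma pos_of_forall_ne_mul_le (hx : IsNonnegEigenvector G μ x) {a b : ℝ} (ha : 0 < a)
    (h : ∀ v, v ≠ u → a * x v ≤ b * x u) : 0 < x u := by
  refine (hx.nonneg u).lt_of_ne fun hu => hx.ne_zero (funext fun v => ?_)
  rcases eq_or_ne v u with rfl | hv
  · exact hu.symm
  · have := h v hv
    rw [← hu, mul_zero] at this
    exact le_antisymm (nonpos_of_mul_nonpos_right this ha) (hx.nonneg v)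

lemma pos_of_forall_le (hx : IsNonnegEigenvector G μ x) (hu : ∀ v, x v ≤ x u) : 0 < x u :=
  hx.pos_of_forall_ne_mul_le one_pos fun v _ => mul_le_mul_of_nonneg_left (hu v) zero_le_one

lemma mul_le_degree_mul (hx : IsNonnegEigenvector G μ x) (hu : ∀ v, x v ≤ x u) (v : V) :
    μ * x v ≤ G.degree v * x u := by
  rw [← hx.sum_neighborFinset, ← card_neighborFinset_eq_degree, ← nsmul_eq_mul]
  exact sum_le_card_nsmul _ _ _ fun w _ => hu w

end IsNonnegEigenvector

lemma sum_degree_add_two_le_of_isAcyclic [Nonempty V] (hF : F.IsAcyclic) :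
    ∑ v, F.degree v + 2 ≤ 2 * Fintype.card V := by
  obtain ⟨T, hFT, hT⟩ := exists_maximal_isAcyclic_of_le_isAcyclic (le_top (a := F)) hF
  rw [connected_top.maximal_le_isAcyclic_iff_isTree le_top] at hT
  have hcard := hT.card_edgeFinset
  have hle : ∑ v, F.degree v ≤ ∑ v, T.degree v := sum_le_sum fun v _ => degree_le_of_le hFT
  rw [T.sum_degrees_eq_twice_card_edges] at hle
  omega

lemma sum_degree_eq_of_split (u : V) :
    ∑ v, G.degree v = 2 * G.degree u + ∑ v ∈ G.neighborFinset u, codegree G u v +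
      2 * ∑ v ∈ Gᶜ.neighborFinset u, codegree G u v +
      ∑ v ∈ Gᶜ.neighborFinset u, #(G.neighborFinset v ∩ Gᶜ.neighborFinset u) := by
  have hnbr : ∑ v ∈ G.neighborFinset u, G.degree v = ∑ w, codegree G u w := by
    simpa only [smul_eq_mul, mul_one, ← card_eq_sum_ones, card_neighborFinset_eq_degree] using
      sum_sum_neighborFinset (G := G) u fun _ => (1 : ℕ)
  have hcompl : ∑ v ∈ Gᶜ.neighborFinset u, G.degree v = ∑ v ∈ Gᶜ.neighborFinset u,
      (codegree G u v + #(G.neighborFinset v ∩ Gᶜ.neighborFinset u)) :=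
    sum_congr rfl fun v hv => degree_eq_of_not_adj ((Gᶜ.mem_neighborFinset u v).1 hv).2
  rw [sum_eq_add_sum_neighborFinset_add_sum_compl (G := G) u, hnbr, hcompl, sum_add_distrib,
    sum_eq_add_sum_neighborFinset_add_sum_compl (G := G) u, codegree_self]
  ring

lemma two_mul_sum_codegree_add_le_of_isAcyclic (hF : F.IsAcyclic) (u : V) :
    2 * ∑ v ∈ Fᶜ.neighborFinset u, codegree F u v +
      ∑ v ∈ Fᶜ.neighborFinset u, #(F.neighborFinset v ∩ Fᶜ.neighborFinset u) ≤
        2 * Fᶜ.degree u := by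
  have : Nonempty V := ⟨u⟩
  have hsum := sum_degree_add_two_le_of_isAcyclic hF
  rw [sum_degree_eq_of_split (G := F) u, ← degree_add_degree_compl (G := F) u] at hsum
  omega

lemma IsNonnegEigenvector.sq_mul_eq_of_isAcyclic (hx : IsNonnegEigenvector F μ x)
    (hF : F.IsAcyclic) (u : V) :
    μ ^ 2 * x u = F.degree u * x u + ∑ w ∈ Fᶜ.neighborFinset u, codegree F u w * x w := by
  have hnbr : ∑ w ∈ F.neighborFinset u, (codegree F u w : ℝ) * x w = 0 :=
    sum_eq_zero fun w hw => by
      rw [codegree_eq_zero_of_isAcyclic hF ((F.mem_neighborFinset u w).1 hw), Nat.cast_zero,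
        zero_mul]
  rw [hx.sq_mul_eq_sum_codegree, sum_eq_add_sum_neighborFinset_add_sum_compl (G := F) u, hnbr,
    codegree_self, add_zero]

lemma IsNonnegEigenvector.sq_le_degree_add_sum_codegree (hx : IsNonnegEigenvector F μ x)
    (hF : F.IsAcyclic) (hu : ∀ v, x v ≤ x u) :
    μ ^ 2 ≤ F.degree u + ∑ w ∈ Fᶜ.neighborFinset u, (codegree F u w : ℝ) := by
  refine le_of_mul_le_mul_right ?_ (hx.pos_of_forall_le hu)
  rw [hx.sq_mul_eq_of_isAcyclic hF, add_mul, sum_mul]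
  gcongr with w
  exact hu w

lemma degree_le_two_mul_of_isAcyclic (hF : F.IsAcyclic) {v : V} (hv : Fᶜ.Adj u v)
    (hw : Fᶜ.Adj u w) (hvw : F.Adj w v) :
    F.degree v ≤ 2 * #(F.neighborFinset v ∩ Fᶜ.neighborFinset u) := by
  have hpos : 0 < #(F.neighborFinset v ∩ Fᶜ.neighborFinset u) :=
    card_pos.2 ⟨w, by simp only [mem_inter, mem_neighborFinset]; exact ⟨hvw.symm, hw⟩⟩
  have := degree_eq_of_not_adj hv.2
  have := codegree_le_one_of_isAcyclic hF hv.1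
  omega

lemma IsNonnegEigenvector.sq_mul_le_of_isAcyclic (hx : IsNonnegEigenvector F μ x)
    (hF : F.IsAcyclic) (hμ : 0 ≤ μ) (hu : ∀ v, x v ≤ x u) (hw : Fᶜ.Adj u w) :
    μ ^ 2 * x w ≤ (μ + 2 * ∑ v ∈ Fᶜ.neighborFinset u,
      (#(F.neighborFinset v ∩ Fᶜ.neighborFinset u) : ℝ)) * x u := by
  have hcommon : ∑ v ∈ F.neighborFinset u ∩ F.neighborFinset w, μ * x v ≤ μ * x u := by
    calc ∑ v ∈ F.neighborFinset u ∩ F.neighborFinset w, μ * x v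
        ≤ codegree F u w • (μ * x u) :=
          sum_le_card_nsmul _ _ _ fun v _ => mul_le_mul_of_nonneg_left (hu v) hμ
      _ ≤ 1 • (μ * x u) := nsmul_le_nsmul_left (mul_nonneg hμ (hx.nonneg u))
          (codegree_le_one_of_isAcyclic hF hw.1)
      _ = μ * x u := one_nsmul _
  have houter : ∑ v ∈ F.neighborFinset w ∩ Fᶜ.neighborFinset u, μ * x v ≤
      ∑ v ∈ Fᶜ.neighborFinset u, 2 * #(F.neighborFinset v ∩ Fᶜ.neighborFinset u) * x u := by
    refine (sum_le_sum fun v hv => ?_).trans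
      (sum_le_sum_of_subset_of_nonneg inter_subset_right fun v _ _ => by
        have := hx.nonneg u
        positivity)
    simp only [mem_inter, mem_neighborFinset] at hv
    refine (hx.mul_le_degree_mul hu v).trans (mul_le_mul_of_nonneg_right ?_ (hx.nonneg u))
    exact_mod_cast degree_le_two_mul_of_isAcyclic hF hv.2 hw hv.1
  calc μ ^ 2 * x w = ∑ v ∈ F.neighborFinset w, μ * x v := by
        rw [← mul_sum, hx.sum_neighborFinset]; ring
    _ ≤ _ := by
        rw [sum_neighborFinset_of_not_adj hw.2, add_mul, mul_sum, sum_mul]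
        exact add_le_add hcommon houter

lemma IsNonnegEigenvector.degree_compl_le_of_isAcyclic (hx : IsNonnegEigenvector F μ x)
    (hF : F.IsAcyclic) (hμ : 0 < μ) (hu : ∀ v, x v ≤ x u)
    (h : μ + 4 * (Fintype.card V - 1 - μ ^ 2) ≤ μ ^ 2 / 3) :
    (Fᶜ.degree u : ℝ) ≤ 3 / 2 * (Fintype.card V - 1 - μ ^ 2) := by
  have hxu := hx.pos_of_forall_le hu
  have hcard : (F.degree u + Fᶜ.degree u + 1 : ℝ) = Fintype.card V := by
    exact_mod_cast degree_add_degree_compl u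
  have hedges : 2 * ∑ v ∈ Fᶜ.neighborFinset u, (codegree F u v : ℝ) +
      ∑ v ∈ Fᶜ.neighborFinset u, (#(F.neighborFinset v ∩ Fᶜ.neighborFinset u) : ℝ) ≤
        2 * Fᶜ.degree u := by
    exact_mod_cast two_mul_sum_codegree_add_le_of_isAcyclic hF u
  have hsq := hx.sq_le_degree_add_sum_codegree hF hu
  have hsmall : ∀ w ∈ Fᶜ.neighborFinset u, codegree F u w * x w ≤ x u / 3 := by
    intro w hw
    rw [mem_neighborFinset] at hw
    have hthird : μ ^ 2 * x w ≤ μ ^ 2 * (x u / 3) :=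
      calc μ ^ 2 * x w ≤ _ := hx.sq_mul_le_of_isAcyclic hF hμ.le hu hw
        _ ≤ μ ^ 2 / 3 * x u := mul_le_mul_of_nonneg_right (by linarith) hxu.le
        _ = μ ^ 2 * (x u / 3) := by ring
    calc codegree F u w * x w ≤ 1 * x w := mul_le_mul_of_nonneg_right
          (by exact_mod_cast codegree_le_one_of_isAcyclic hF hw.1) (hx.nonneg w)
      _ ≤ x u / 3 := by rw [one_mul]; exact le_of_mul_le_mul_left hthird (by positivity)
  have hsum : μ ^ 2 * x u ≤ (F.degree u + Fᶜ.degree u / 3) * x u := by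
    calc μ ^ 2 * x u ≤ F.degree u * x u + Fᶜ.degree u • (x u / 3) := by
          rw [hx.sq_mul_eq_of_isAcyclic hF, ← card_neighborFinset_eq_degree Fᶜ]
          exact add_le_add_right (sum_le_card_nsmul _ _ _ hsmall) _
      _ = (F.degree u + Fᶜ.degree u / 3) * x u := by rw [nsmul_eq_mul]; ring
  linarith [le_of_mul_le_mul_right hsum hxu]

end Forest

section SmallEntries

open Finset SimpleGraph

variable {V : Type*} [Fintype V] {G : SimpleGraph V} [DecidableRel G.Adj] {K : ℕ} {μ M : ℝ}
  {x : V → ℝ} {u v w : V}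

lemma card_erase_neighborFinset_le (u v : V) :
    #((G.neighborFinset v).erase u) ≤
      codegree G u v + #(G.neighborFinset v ∩ Gᶜ.neighborFinset u) := by
  refine (card_le_card fun z hz => ?_).trans (card_union_le _ _)
  simp only [mem_erase, mem_union, mem_inter, mem_neighborFinset, compl_adj, ne_comm (a := u)]
    at hz ⊢
  tauto

lemma sum_card_inter_compl_le (hK : ∀ ⦃a b⦄, a ≠ b → codegree G a b ≤ K) (u w : V) :
    ∑ v ∈ (G.neighborFinset w).erase u, #(G.neighborFinset v ∩ Gᶜ.neighborFinset u) ≤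
      Gᶜ.degree u * K + #((G.neighborFinset w).erase u) := by
  calc ∑ v ∈ (G.neighborFinset w).erase u, #(G.neighborFinset v ∩ Gᶜ.neighborFinset u)
      = ∑ z ∈ Gᶜ.neighborFinset u, #((G.neighborFinset w).erase u ∩ G.neighborFinset z) := by
        simp only [card_eq_sum_ones]
        refine sum_comm' fun v z => ?_
        simp only [mem_inter, mem_neighborFinset, G.adj_comm v z]
        tauto
    _ ≤ ∑ z ∈ Gᶜ.neighborFinset u, (K + if z = w then #((G.neighborFinset w).erase u) else 0) := by
        gcongr with z
        split_ifs with hz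
        · exact (card_le_card inter_subset_left).trans (Nat.le_add_left _ _)
        · exact (card_le_card (inter_subset_inter_right (erase_subset _ _))).trans
            (hK (Ne.symm hz))
    _ ≤ Gᶜ.degree u * K + #((G.neighborFinset w).erase u) := by
        rw [sum_add_distrib, sum_const, smul_eq_mul, card_neighborFinset_eq_degree, sum_ite_eq']
        split_ifs <;> simp

lemma sum_card_erase_neighborFinset_le (hK : ∀ ⦃a b⦄, a ≠ b → codegree G a b ≤ K) (hw : w ≠ u) :
    ∑ v ∈ (G.neighborFinset w).erase u, #((G.neighborFinset v).erase u) ≤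
      K * (K + 1) + Gᶜ.degree u * (2 * K + 1) := by
  have hdeg : #((G.neighborFinset w).erase u) ≤ K + Gᶜ.degree u := by
    refine (card_erase_neighborFinset_le u w).trans (add_le_add (hK hw.symm) ?_)
    rw [← card_neighborFinset_eq_degree]
    exact card_le_card inter_subset_right
  calc ∑ v ∈ (G.neighborFinset w).erase u, #((G.neighborFinset v).erase u)
      ≤ ∑ v ∈ (G.neighborFinset w).erase u,
          (K + #(G.neighborFinset v ∩ Gᶜ.neighborFinset u)) := by
        gcongr with v hv
        exact (card_erase_neighborFinset_le u v).trans
          (Nat.add_le_add_right (hK (ne_of_mem_erase hv).symm) _)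
    _ ≤ #((G.neighborFinset w).erase u) * K +
          (Gᶜ.degree u * K + #((G.neighborFinset w).erase u)) := by
        rw [sum_add_distrib, sum_const, smul_eq_mul]
        gcongr
        exact sum_card_inter_compl_le hK u w
    _ ≤ K * (K + 1) + Gᶜ.degree u * (2 * K + 1) := by nlinarith

namespace IsNonnegEigenvector

lemma mul_le_of_forall_ne_le (hx : IsNonnegEigenvector G μ x) (hM : ∀ z, z ≠ u → x z ≤ M)
    (v : V) :
    μ * x v ≤ (if G.Adj u v then x u else 0) + #((G.neighborFinset v).erase u) * M := by
  have hrest : ∑ z ∈ (G.neighborFinset v).erase u, x z ≤ #((G.neighborFinset v).erase u) * M := by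
    rw [← nsmul_eq_mul]
    exact sum_le_card_nsmul _ _ _ fun z hz => hM z (ne_of_mem_erase hz)
  rw [← hx.sum_neighborFinset]
  split_ifs with huv
  · rw [← add_sum_erase _ _ ((G.mem_neighborFinset v u).2 huv.symm)]
    exact add_le_add_right hrest _
  · rw [erase_eq_of_notMem fun h => huv ((G.mem_neighborFinset v u).1 h).symm] at hrest ⊢
    rwa [zero_add]

lemma sq_mul_le_of_forall_ne_le (hx : IsNonnegEigenvector G μ x) (hμ : 0 ≤ μ)
    (hK : ∀ ⦃a b⦄, a ≠ b → codegree G a b ≤ K) (hw : w ≠ u) (hmax : ∀ v, v ≠ u → x v ≤ x w) :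
    μ ^ 2 * x w ≤
      (μ + K) * x u + (K * (K + 1) + Gᶜ.degree u * (2 * K + 1)) * x w := by
  have hfirst : μ ^ 2 * x w ≤ μ * x u + ∑ v ∈ (G.neighborFinset w).erase u, μ * x v := by
    calc μ ^ 2 * x w = ∑ v ∈ G.neighborFinset w, μ * x v := by
          rw [← mul_sum, hx.sum_neighborFinset]; ring
      _ ≤ ∑ v ∈ insert u ((G.neighborFinset w).erase u), μ * x v :=
          sum_le_sum_of_subset_of_nonneg (subset_insert_iff.2 subset_rfl)
            fun v _ _ => mul_nonneg hμ (hx.nonneg v)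
      _ = μ * x u + ∑ v ∈ (G.neighborFinset w).erase u, μ * x v :=
          sum_insert (notMem_erase _ _)
  have hcommon : ∑ v ∈ (G.neighborFinset w).erase u, (if G.Adj u v then x u else 0) ≤
      K * x u := by
    rw [← sum_filter, sum_const, nsmul_eq_mul]
    refine mul_le_mul_of_nonneg_right (Nat.cast_le.2 ?_) (hx.nonneg u)
    refine (card_le_card fun v hv => ?_).trans (hK hw)
    simp only [mem_filter, mem_erase, mem_inter, mem_neighborFinset] at hv ⊢
    exact ⟨hv.1.2, hv.2⟩
  have hwalks : (∑ v ∈ (G.neighborFinset w).erase u, (#((G.neighborFinset v).erase u) : ℝ)) ≤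
      K * (K + 1) + Gᶜ.degree u * (2 * K + 1) := by
    exact_mod_cast sum_card_erase_neighborFinset_le hK hw
  calc μ ^ 2 * x w ≤ μ * x u + ∑ v ∈ (G.neighborFinset w).erase u,
          ((if G.Adj u v then x u else 0) + #((G.neighborFinset v).erase u) * x w) :=
        hfirst.trans (add_le_add_right (sum_le_sum fun v _ => hx.mul_le_of_forall_ne_le hmax v) _)
    _ ≤ μ * x u + (K * x u + (K * (K + 1) + Gᶜ.degree u * (2 * K + 1)) * x w) := by
        rw [sum_add_distrib, ← sum_mul]
        gcongr
        exact hx.nonneg w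
    _ = _ := by ring

end IsNonnegEigenvector

end SmallEntries

section Rehang

open Finset SimpleGraph Matrix

variable {V : Type*} [Fintype V] {G : SimpleGraph V} [DecidableRel G.Adj] {K : ℕ} {μ M t : ℝ}
  {x z : V → ℝ} {u v : V}

lemma mulVec_apply_le_of_compl_adj (hM : 0 ≤ M)
    (hK : ∀ ⦃a b⦄, a ≠ b → codegree G a b ≤ K) (hzM : ∀ v, v ≠ u → z v ≤ M)
    (hz : ∀ v, Gᶜ.Adj u v → z v = 0) (hv : Gᶜ.Adj u v) :
    (G.adjMatrix ℝ *ᵥ z) v ≤ K * M := by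
  rw [adjMatrix_mulVec_apply, sum_neighborFinset_of_not_adj hv.2,
    sum_eq_zero (s := _ ∩ Gᶜ.neighborFinset u) fun w hw =>
      hz w ((Gᶜ.mem_neighborFinset u w).1 (mem_of_mem_inter_right hw)), add_zero]
  calc ∑ w ∈ G.neighborFinset u ∩ G.neighborFinset v, z w ≤ codegree G u v • M :=
        sum_le_card_nsmul _ _ _ fun w hw => hzM w
          ((G.mem_neighborFinset u w).1 (mem_of_mem_inter_left hw)).ne'
    _ ≤ K * M := by
        rw [nsmul_eq_mul]
        exact mul_le_mul_of_nonneg_right (Nat.cast_le.2 (hK hv.1)) hM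

lemma IsNonnegEigenvector.dotProduct_mulVec_eq (hx : IsNonnegEigenvector G μ x) {z : V → ℝ}
    (hz : ∀ v, Gᶜ.Adj u v → z v = 0) (hxz : ∀ v, ¬ Gᶜ.Adj u v → z v = x v) :
    z ⬝ᵥ G.adjMatrix ℝ *ᵥ z =
      μ * (z ⬝ᵥ z) - ∑ v ∈ Gᶜ.neighborFinset u, x v * (G.adjMatrix ℝ *ᵥ z) v := by
  have hsupp : ∀ f : V → ℝ, x ⬝ᵥ f = z ⬝ᵥ f + ∑ v ∈ Gᶜ.neighborFinset u, x v * f v := by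
    intro f
    rw [dotProduct, dotProduct, ← sum_add_sum_compl (Gᶜ.neighborFinset u) fun v => x v * f v,
      ← sum_add_sum_compl (Gᶜ.neighborFinset u) fun v => z v * f v,
      sum_eq_zero (s := Gᶜ.neighborFinset u) (f := fun v => z v * f v) fun v hv => by
        rw [hz v ((Gᶜ.mem_neighborFinset u v).1 hv), zero_mul], zero_add, add_comm]
    congr 1
    exact sum_congr rfl fun v hv => by
      rw [hxz v fun h => mem_compl.1 hv ((Gᶜ.mem_neighborFinset u v).2 h)]
  have hzero : ∑ v ∈ Gᶜ.neighborFinset u, x v * z v = 0 := sum_eq_zero fun v hv => by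
    rw [hz v ((Gᶜ.mem_neighborFinset u v).1 hv), mul_zero]
  have heig : x ⬝ᵥ G.adjMatrix ℝ *ᵥ z = μ * (z ⬝ᵥ z) := by
    rw [dotProduct_mulVec, ← mulVec_transpose, transpose_adjMatrix, hx.mulVec_eq, smul_dotProduct,
      smul_eq_mul, hsupp z, hzero, add_zero]
  rw [← heig, hsupp]
  ring

lemma IsNonnegEigenvector.le_dotProduct_mulVec (hx : IsNonnegEigenvector G μ x)
    (hK : ∀ ⦃a b⦄, a ≠ b → codegree G a b ≤ K) (hM : 0 ≤ M) (hxM : ∀ v, v ≠ u → x v ≤ M)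
    (hz : ∀ v, Gᶜ.Adj u v → z v = 0) (hxz : ∀ v, ¬ Gᶜ.Adj u v → z v = x v) :
    μ * (z ⬝ᵥ z) - Gᶜ.degree u * (K * M ^ 2) ≤ z ⬝ᵥ G.adjMatrix ℝ *ᵥ z := by
  have hzM : ∀ v, v ≠ u → z v ≤ M := fun v hv => by
    by_cases huv : Gᶜ.Adj u v
    · exact (hz v huv).trans_le hM
    · exact (hxz v huv).trans_le (hxM v hv)
  rw [hx.dotProduct_mulVec_eq hz hxz, ← card_neighborFinset_eq_degree, ← nsmul_eq_mul]
  refine sub_le_sub_left (sum_le_card_nsmul _ _ _ fun v hv => ?_) _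
  rw [mem_neighborFinset] at hv
  calc x v * (G.adjMatrix ℝ *ᵥ z) v ≤ x v * (K * M) := mul_le_mul_of_nonneg_left
        (mulVec_apply_le_of_compl_adj hM hK hzM hz hv) (hx.nonneg v)
    _ ≤ M * (K * M) := mul_le_mul_of_nonneg_right (hxM v hv.1.symm) (by positivity)
    _ = K * M ^ 2 := by ring

/-- The graph obtained from `G` by rehanging every non-neighbor of `u` as a pendant vertex at `u`:
`u` becomes adjacent to every other vertex, and only the edges inside the neighborhood of `u`
survive. -/
def rehang {V : Type*} (G : SimpleGraph V) (u : V) : SimpleGraph V where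
  Adj a b := a ≠ b ∧ (a = u ∨ b = u ∨ G.Adj u a ∧ G.Adj u b ∧ G.Adj a b)
  symm := ⟨fun a b h => ⟨h.1.symm, by
    simpa only [G.adj_comm b a, and_left_comm, or_left_comm] using h.2⟩⟩
  loopless := ⟨fun _ h => h.1 rfl⟩

lemma rehang_adj {V : Type*} {G : SimpleGraph V} {u a b : V} : (rehang G u).Adj a b ↔
    a ≠ b ∧ (a = u ∨ b = u ∨ G.Adj u a ∧ G.Adj u b ∧ G.Adj a b) := Iff.rfl

lemma HasEDC.of_rehang {V : Type*} {G : SimpleGraph V} {u : V} {m : ℕ}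
    (h : HasEDC (rehang G u) m) : HasEDC G m := by
  refine h.transfer fun v C hC => ?_
  have hnbr : ∀ b ∈ C.support, b ≠ u → G.Adj u b := by
    intro b hb hbu
    by_contra hub
    have hsub : C.toSubgraph.neighborSet b ⊆ {u} := fun z hz => by
      rcases (C.toSubgraph.adj_sub hz).2 with h | h | h
      exacts [absurd h hbu, h, absurd h.1 hub]
    have := Set.ncard_le_ncard hsub
    rw [hC.ncard_neighborSet_toSubgraph_eq_two hb, Set.ncard_singleton] at this
    omega
  refine Sym2.ind fun a b he => ?_
  obtain ⟨hne, rfl | rfl | h⟩ := C.edges_subset_edgeSet he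
  · exact hnbr b (C.snd_mem_support_of_mem_edges he) hne.symm
  · exact (hnbr a (C.fst_mem_support_of_mem_edges he) hne).symm
  · exact h.2.2

lemma neighborFinset_rehang_self [DecidableRel (rehang G u).Adj] :
    (rehang G u).neighborFinset u = G.neighborFinset u ∪ Gᶜ.neighborFinset u := by
  ext w
  have : G.Adj u w → u ≠ w := G.ne_of_adj
  simp only [mem_union, mem_neighborFinset, compl_adj, rehang_adj]
  tauto

lemma neighborFinset_rehang_of_adj [DecidableRel (rehang G u).Adj] (huv : G.Adj u v) :
    (rehang G u).neighborFinset v = G.neighborFinset v \ Gᶜ.neighborFinset u := by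
  ext w
  have : G.Adj v w → v ≠ w := G.ne_of_adj
  have : u = w → G.Adj v w ∧ v ≠ w := by rintro rfl; exact ⟨huv.symm, huv.ne'⟩
  simp only [mem_sdiff, mem_neighborFinset, compl_adj, rehang_adj, huv.ne', eq_comm (b := u)]
  tauto

lemma neighborFinset_rehang_of_compl_adj {G : SimpleGraph V} {u v : V}
    [DecidableRel (rehang G u).Adj] (huv : Gᶜ.Adj u v) :
    (rehang G u).neighborFinset v = {u} := by
  ext w
  simp only [mem_singleton, mem_neighborFinset, rehang_adj, huv.2, huv.1.symm, false_and, or_false,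
    false_or, and_iff_right_iff_imp]
  rintro rfl
  exact huv.1.symm

lemma dotProduct_adjMatrix_rehang_mulVec [DecidableRel (rehang G u).Adj] {y z : V → ℝ}
    (hyz : ∀ v, ¬ Gᶜ.Adj u v → y v = z v)
    (hz : ∀ v, Gᶜ.Adj u v → z v = 0) (hy : ∀ v, Gᶜ.Adj u v → y v = t) :
    y ⬝ᵥ (rehang G u).adjMatrix ℝ *ᵥ y =
      z ⬝ᵥ G.adjMatrix ℝ *ᵥ z + 2 * Gᶜ.degree u * t * z u := by
  have hy_nbr : ∀ v ∈ G.neighborFinset u, y v = z v := fun v hv =>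
    hyz v fun h => h.2 ((G.mem_neighborFinset u v).1 hv)
  have hdisj : Disjoint (G.neighborFinset u) (Gᶜ.neighborFinset u) :=
    disjoint_left.2 fun v hv hv' =>
      ((Gᶜ.mem_neighborFinset u v).1 hv').2 ((G.mem_neighborFinset u v).1 hv)
  have hat_u : ∑ v ∈ (rehang G u).neighborFinset u, y v =
      ∑ v ∈ G.neighborFinset u, z v + Gᶜ.degree u * t := by
    rw [neighborFinset_rehang_self, sum_union hdisj, sum_congr rfl hy_nbr,
      sum_congr rfl fun v hv => hy v ((Gᶜ.mem_neighborFinset u v).1 hv), sum_const,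
      card_neighborFinset_eq_degree, nsmul_eq_mul]
  have hat_nbr : ∀ v ∈ G.neighborFinset u,
      y v * ∑ w ∈ (rehang G u).neighborFinset v, y w = z v * ∑ w ∈ G.neighborFinset v, z w := by
    intro v hv
    rw [hy_nbr v hv, neighborFinset_rehang_of_adj ((G.mem_neighborFinset u v).1 hv),
      ← sum_inter_add_sum_sdiff (G.neighborFinset v) (Gᶜ.neighborFinset u) z,
      sum_eq_zero (s := _ ∩ _) fun w hw =>
        hz w ((Gᶜ.mem_neighborFinset u w).1 (mem_of_mem_inter_right hw)), zero_add]
    congr 1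
    exact sum_congr rfl fun w hw =>
      hyz w (mt (Gᶜ.mem_neighborFinset u w).2 (mem_sdiff.1 hw).2)
  have hat_compl : ∀ v ∈ Gᶜ.neighborFinset u,
      y v * ∑ w ∈ (rehang G u).neighborFinset v, y w = t * z u := by
    intro v hv
    rw [mem_neighborFinset] at hv
    rw [hy v hv, neighborFinset_rehang_of_compl_adj hv, sum_singleton,
      hyz u fun h => h.1 rfl]
  simp only [dotProduct, adjMatrix_mulVec_apply]
  rw [sum_eq_add_sum_neighborFinset_add_sum_compl (G := G) u,
    sum_eq_add_sum_neighborFinset_add_sum_compl (G := G) u, hat_u, hyz u fun h => h.1 rfl,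
    sum_congr rfl hat_nbr, sum_congr rfl hat_compl, sum_const, card_neighborFinset_eq_degree,
    sum_eq_zero (s := Gᶜ.neighborFinset u) fun v hv => by
      rw [hz v ((Gᶜ.mem_neighborFinset u v).1 hv), zero_mul], nsmul_eq_mul]
  ring

/-- The Rayleigh quotient of `rehang G u` is tested on `x` with its entries at the non-neighbors
of `u` replaced by `x u / μ`, the value forced at a pendant neighbor of `u`. -/
lemma IsNonnegEigenvector.degree_compl_mul_sq_le (hx : IsNonnegEigenvector G μ x) (hμ : 0 < μ)
    (hrehang : specRad (rehang G u) ≤ μ) (hK : ∀ ⦃a b⦄, a ≠ b → codegree G a b ≤ K)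
    (hM : 0 ≤ M) (hxM : ∀ v, v ≠ u → x v ≤ M) :
    Gᶜ.degree u * x u ^ 2 ≤ Gᶜ.degree u * (μ * K * M ^ 2) := by
  have huu : ¬ Gᶜ.Adj u u := Gᶜ.irrefl
  set z : V → ℝ := fun v => if Gᶜ.Adj u v then 0 else x v with hz_def
  set y : V → ℝ := fun v => if Gᶜ.Adj u v then x u / μ else x v with hy_def
  have hz : ∀ v, Gᶜ.Adj u v → z v = 0 := fun v hv => if_pos hv
  have hxz : ∀ v, ¬ Gᶜ.Adj u v → z v = x v := fun v hv => if_neg hv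
  have hyz : ∀ v, ¬ Gᶜ.Adj u v → y v = z v := fun v hv => (if_neg hv).trans (hxz v hv).symm
  have hyy : y ⬝ᵥ y = z ⬝ᵥ z + Gᶜ.degree u * (x u / μ) ^ 2 := by
    rw [← card_neighborFinset_eq_degree, ← nsmul_eq_mul, ← sum_const, neighborFinset_eq_filter,
      sum_filter, dotProduct, dotProduct, ← sum_add_distrib]
    refine sum_congr rfl fun v _ => ?_
    simp only [hz_def, hy_def]
    split_ifs <;> ring
  have hray : y ⬝ᵥ (rehang G u).adjMatrix ℝ *ᵥ y ≤ μ * (y ⬝ᵥ y) :=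
    (dotProduct_adjMatrix_mulVec_le_specRad y).trans
      (mul_le_mul_of_nonneg_right hrehang (sum_nonneg fun v _ => mul_self_nonneg _))
  rw [dotProduct_adjMatrix_rehang_mulVec hyz hz fun v hv => if_pos hv, hyy, hxz u huu] at hray
  have hgain : Gᶜ.degree u * (x u ^ 2 / μ) ≤ Gᶜ.degree u * (K * M ^ 2) := by
    have := hx.le_dotProduct_mulVec hK hM hxM hz hxz
    have : μ * (Gᶜ.degree u * (x u / μ) ^ 2) = Gᶜ.degree u * (x u ^ 2 / μ) := by field_simp
    have : 2 * Gᶜ.degree u * (x u / μ) * x u = 2 * (Gᶜ.degree u * (x u ^ 2 / μ)) := by ring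
    linarith
  calc Gᶜ.degree u * x u ^ 2 = μ * (Gᶜ.degree u * (x u ^ 2 / μ)) := by field_simp
    _ ≤ μ * (Gᶜ.degree u * (K * M ^ 2)) := mul_le_mul_of_nonneg_left hgain hμ.le
    _ = Gᶜ.degree u * (μ * K * M ^ 2) := by ring

end Rehang

section Universal

open Finset SimpleGraph Matrix

variable {V : Type*} [Fintype V] {G : SimpleGraph V} [DecidableRel G.Adj] {K : ℕ} {μ : ℝ}
  {x : V → ℝ} {u v : V}

lemma two_mul_ecard_eq_sum_degree : 2 * ecard G = ∑ v, G.degree v := by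
  rw [G.sum_degrees_eq_twice_card_edges, ecard, Nat.card_eq_fintype_card, edgeFinset_card]

lemma sum_codegree_le_of_cover {S : Finset V} (hK : ∀ ⦃a b⦄, a ≠ b → codegree G a b ≤ K)
    (hS : ∀ a b, G.Adj u a → G.Adj u b → G.Adj a b → a ∈ S ∨ b ∈ S) :
    ∑ v ∈ G.neighborFinset u, codegree G u v ≤ 2 * (#S * K) := by
  have hsum : ∑ s ∈ G.neighborFinset u ∩ S, codegree G u s ≤ #S * K :=
    (sum_le_card_nsmul _ _ K fun s hs =>
      hK ((G.mem_neighborFinset u s).1 (mem_of_mem_inter_left hs)).ne).trans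
        (Nat.mul_le_mul_right K (card_le_card inter_subset_right))
  have hout : ∑ v ∈ G.neighborFinset u \ S, codegree G u v ≤
      ∑ s ∈ G.neighborFinset u ∩ S, codegree G u s := by
    calc ∑ v ∈ G.neighborFinset u \ S, codegree G u v
        ≤ ∑ v ∈ G.neighborFinset u \ S, #(G.neighborFinset v ∩ (G.neighborFinset u ∩ S)) := by
          refine sum_le_sum fun v hv => card_le_card fun w hw => ?_
          simp only [mem_sdiff, mem_inter, mem_neighborFinset] at hv hw ⊢
          exact ⟨hw.2, hw.1, (hS v w hv.1 hw.1 hw.2).resolve_left hv.2⟩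
      _ = ∑ s ∈ G.neighborFinset u ∩ S, #((G.neighborFinset u \ S) ∩ G.neighborFinset s) := by
          simp only [card_eq_sum_ones]
          refine sum_comm' fun v s => ?_
          simp only [mem_inter, mem_sdiff, mem_neighborFinset, G.adj_comm v s]
          tauto
      _ ≤ ∑ s ∈ G.neighborFinset u ∩ S, codegree G u s :=
          sum_le_sum fun s _ => card_le_card (inter_subset_inter_right sdiff_subset)
  rw [← sum_inter_add_sum_sdiff (G.neighborFinset u) S]
  omega

lemma mul_degree_add_le_specRad_mul (u : V) (t : ℝ) :
    2 * (ecard G - G.degree u) + 2 * t * G.degree u ≤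
      specRad G * (Fintype.card V - 1 + t ^ 2) := by
  set y : V → ℝ := 1 + (t - 1) • Pi.single u 1 with hy
  have hA1 : ∀ v, (G.adjMatrix ℝ *ᵥ 1) v = G.degree v := fun v => by
    simp only [adjMatrix_mulVec_apply, Pi.one_apply, sum_const, card_neighborFinset_eq_degree,
      nsmul_one]
  have hAu : 1 ⬝ᵥ G.adjMatrix ℝ *ᵥ Pi.single u 1 = (G.degree u : ℝ) := by
    rw [dotProduct_mulVec, ← mulVec_transpose, transpose_adjMatrix, dotProduct_single_one, hA1]
  have h11 : (1 : V → ℝ) ⬝ᵥ G.adjMatrix ℝ *ᵥ 1 = 2 * ecard G := by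
    simp only [one_dotProduct, hA1]
    exact_mod_cast two_mul_ecard_eq_sum_degree.symm
  have huu : (Pi.single u 1 : V → ℝ) ⬝ᵥ G.adjMatrix ℝ *ᵥ Pi.single u 1 = 0 := by
    rw [single_one_dotProduct, mulVec_single_one, col_apply, adjMatrix_apply, if_neg G.irrefl]
  have hray := dotProduct_adjMatrix_mulVec_le_specRad (G := G) y
  have hyy : y ⬝ᵥ y = Fintype.card V - 1 + t ^ 2 := by
    simp only [hy, add_dotProduct, dotProduct_add, smul_dotProduct, dotProduct_smul,
      dotProduct_single_one, single_one_dotProduct, one_dotProduct_one, Pi.add_apply,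
      Pi.smul_apply, Pi.one_apply, Pi.single_eq_same, smul_eq_mul]
    ring
  rw [hyy] at hray
  simp only [hy, mulVec_add, mulVec_smul, add_dotProduct, dotProduct_add, smul_dotProduct,
    dotProduct_smul, h11, hAu, huu, single_one_dotProduct, hA1, smul_eq_mul] at hray
  linarith

lemma neighborFinset_compl_eq_empty_iff : Gᶜ.neighborFinset u = ∅ ↔ G.IsUniversal u := by
  simp only [eq_empty_iff_forall_notMem, mem_neighborFinset, compl_adj, IsUniversal, not_and,
    not_not]

lemma degree_compl_eq_zero_iff : Gᶜ.degree u = 0 ↔ G.IsUniversal u := by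
  rw [← card_neighborFinset_eq_degree, card_eq_zero, neighborFinset_compl_eq_empty_iff]

lemma degree_of_isUniversal (hu : G.IsUniversal u) : (G.degree u : ℝ) = Fintype.card V - 1 := by
  rw [← degree_add_degree_compl (G := G) u, degree_compl_eq_zero_iff.2 hu, add_zero,
    Nat.cast_add_one, add_sub_cancel_right]

lemma two_mul_ecard_of_isUniversal (hu : G.IsUniversal u) :
    2 * ecard G = 2 * G.degree u + ∑ v ∈ G.neighborFinset u, codegree G u v := by
  rw [two_mul_ecard_eq_sum_degree, sum_degree_eq_of_split u,
    neighborFinset_compl_eq_empty_iff.2 hu, sum_empty, sum_empty,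
    mul_zero, add_zero, add_zero]

lemma card_sub_one_le_ecard_of_isUniversal {G : SimpleGraph V}
    (hu : G.IsUniversal u) : (Fintype.card V : ℝ) - 1 ≤ ecard G := by
  rw [← degree_of_isUniversal hu, ecard, Nat.card_eq_fintype_card, ← edgeFinset_card]
  exact_mod_cast G.degree_le_card_edgeFinset u

lemma sqrt_le_specRad_of_isUniversal [Nontrivial V] {G : SimpleGraph V}
    (hu : G.IsUniversal u) : √(Fintype.card V - 1) ≤ specRad G := by
  have hcard : (1 : ℝ) < Fintype.card V := by exact_mod_cast Fintype.one_lt_card (α := V)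
  have hdeg := degree_of_isUniversal hu
  have hedges := card_sub_one_le_ecard_of_isUniversal hu
  have hle := mul_degree_add_le_specRad_mul (G := G) u √(Fintype.card V - 1)
  rw [Real.sq_sqrt (sub_pos.2 hcard).le] at hle
  refine le_of_mul_le_mul_right (a := 2 * ((Fintype.card V : ℝ) - 1)) ?_ (by linarith)
  rw [hdeg] at hle
  linarith

lemma two_mul_ecard_sub_le_of_isUniversal {G : SimpleGraph V} (hu : G.IsUniversal u)
    (hμ : specRad G ≤ μ) :
    2 * ((ecard G : ℝ) - (Fintype.card V - 1)) ≤ μ * (μ ^ 2 - (Fintype.card V - 1)) := by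
  have hdeg := degree_of_isUniversal hu
  have hle := mul_degree_add_le_specRad_mul (G := G) u μ
  rw [hdeg] at hle
  have := mul_le_mul_of_nonneg_right hμ
    (add_nonneg (hdeg ▸ Nat.cast_nonneg (G.degree u)) (sq_nonneg μ))
  linarith

namespace IsNonnegEigenvector

lemma sub_mul_le_of_isUniversal (hx : IsNonnegEigenvector G μ x) (hu : G.IsUniversal u)
    (hK : ∀ ⦃a b⦄, a ≠ b → codegree G a b ≤ K) (hKμ : K ≤ μ) (hv : v ≠ u) :
    (μ - K) * x v ≤ x u := by
  obtain ⟨w, hwu, hw⟩ := exists_max_image (univ.erase u) x ⟨v, mem_erase.2 ⟨hv, mem_univ v⟩⟩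
  have hmax : ∀ v, v ≠ u → x v ≤ x w := fun v hv => hw v (mem_erase.2 ⟨hv, mem_univ v⟩)
  have hcard : (#((G.neighborFinset w).erase u) : ℝ) ≤ K := by
    have := card_erase_neighborFinset_le (G := G) u w
    rw [neighborFinset_compl_eq_empty_iff.2 hu, inter_empty, card_empty, add_zero] at this
    exact_mod_cast this.trans (hK (ne_of_mem_erase hwu).symm)
  have hrow := hx.mul_le_of_forall_ne_le hmax w
  rw [if_pos (hu (ne_of_mem_erase hwu).symm)] at hrow
  calc (μ - K) * x v ≤ (μ - K) * x w :=
        mul_le_mul_of_nonneg_left (hmax v hv) (sub_nonneg.2 hKμ)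
    _ ≤ x u := by linarith [mul_le_mul_of_nonneg_right hcard (hx.nonneg w)]

lemma sq_sub_mul_sub_le_of_isUniversal (hx : IsNonnegEigenvector G μ x) (hu : G.IsUniversal u)
    (hK : ∀ ⦃a b⦄, a ≠ b → codegree G a b ≤ K) (hKμ : K < μ) :
    (μ ^ 2 - (Fintype.card V - 1)) * (μ - K) ≤ 2 * (ecard G - (Fintype.card V - 1)) := by
  have hdeg := degree_of_isUniversal hu
  have hedges : 2 * (ecard G : ℝ) =
      2 * G.degree u + ∑ v ∈ G.neighborFinset u, (codegree G u v : ℝ) := by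
    exact_mod_cast two_mul_ecard_of_isUniversal hu
  have hsmall : ∀ v, v ≠ u → (μ - K) * x v ≤ x u := fun v hv =>
    hx.sub_mul_le_of_isUniversal hu hK hKμ.le hv
  have hxu : 0 < x u := hx.pos_of_forall_ne_mul_le (sub_pos.2 hKμ) (b := 1) (by simpa using hsmall)
  have hsq : μ ^ 2 * x u =
      G.degree u * x u + ∑ v ∈ G.neighborFinset u, codegree G u v * x v := by
    rw [hx.sq_mul_eq_sum_codegree, sum_eq_add_sum_neighborFinset_add_sum_compl (G := G) u,
      neighborFinset_compl_eq_empty_iff.2 hu, sum_empty, add_zero, codegree_self]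
  refine le_of_mul_le_mul_right ?_ hxu
  calc (μ ^ 2 - (Fintype.card V - 1)) * (μ - K) * x u
      = ∑ v ∈ G.neighborFinset u, codegree G u v * ((μ - K) * x v) := by
        simp only [mul_left_comm _ (μ - K), ← mul_sum]
        rw [← hdeg]
        linear_combination (μ - K) * hsq
    _ ≤ ∑ v ∈ G.neighborFinset u, codegree G u v * x u := by
        gcongr with v hv
        exact hsmall v ((G.mem_neighborFinset u v).1 hv).ne'
    _ = 2 * (ecard G - (Fintype.card V - 1)) * x u := by
        rw [← sum_mul, ← hdeg]
        linear_combination -x u * hedges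

lemma ecard_le_of_isUniversal {G' : SimpleGraph V} {u' : V} (hx : IsNonnegEigenvector G μ x)
    (hu : G.IsUniversal u) (hK : ∀ ⦃a b⦄, a ≠ b → codegree G a b ≤ K)
    (hKμ : (ecard G - (Fintype.card V - 1) + 1) * K < μ) (hu' : G'.IsUniversal u')
    (hμ : specRad G' ≤ μ) : ecard G' ≤ ecard G := by
  have hlow := two_mul_ecard_sub_le_of_isUniversal hu' hμ
  have hh := sub_nonneg.2 (card_sub_one_le_ecard_of_isUniversal hu)
  have hle : (K : ℝ) < μ := by nlinarith [mul_nonneg hh (Nat.cast_nonneg (α := ℝ) K)]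
  have hupp := hx.sq_sub_mul_sub_le_of_isUniversal hu hK hle
  have hμ0 : 0 < μ := (Nat.cast_nonneg K).trans_lt hle
  by_contra! hlt
  have hlt' : (ecard G : ℝ) + 1 ≤ ecard G' := by exact_mod_cast hlt
  set h : ℝ := ecard G - (Fintype.card V - 1)
  have hgap : 2 * (h + 1) * (μ - K) ≤ μ * (2 * h) :=
    calc 2 * (h + 1) * (μ - K) ≤ μ * (μ ^ 2 - (Fintype.card V - 1)) * (μ - K) :=
          mul_le_mul_of_nonneg_right (by linarith) (sub_nonneg.2 hle.le)
      _ = μ * ((μ ^ 2 - (Fintype.card V - 1)) * (μ - K)) := mul_assoc _ _ _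
      _ ≤ μ * (2 * h) := mul_le_mul_of_nonneg_left hupp hμ0.le
  linarith

end IsNonnegEigenvector

end Universal

section Estimates

variable {k n : ℕ} {a b h K p r s l : ℝ}

lemma one_lt_of_mul_pow_le (hk : 1 ≤ k) (hn : 64 * k ^ 6 ≤ n) : 1 < n := by
  have := Nat.one_le_pow 6 k hk
  omega

lemma mul_cube_sub_le_sqrt (hk : 1 ≤ k) (hn : 64 * k ^ 6 ≤ n) :
    8 * (k : ℝ) ^ 3 - 1 / 8 ≤ √(n - 1) := by
  have hn' : 64 * ((k : ℝ) ^ 3) ^ 2 ≤ n := by rw [← pow_mul]; exact_mod_cast hn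
  have hk3 : (1 : ℝ) ≤ (k : ℝ) ^ 3 := one_le_pow₀ (by exact_mod_cast hk)
  exact Real.le_sqrt_of_sq_le (by nlinarith)

lemma mul_sub_one_add_le (hk : 1 ≤ k) : 52 * ((k : ℝ) - 1) + 3 ≤ 8 * (k : ℝ) ^ 3 - 1 / 8 := by
  rcases hk.eq_or_lt with rfl | hk
  · norm_num
  · obtain ⟨t, rfl⟩ := Nat.exists_eq_add_of_le' hk
    push_cast
    nlinarith [pow_nonneg (Nat.cast_nonneg (α := ℝ) t) 3]

lemma add_mul_sq_sub_sq_le (ha : 0 ≤ a) (hr : 26 * a + 3 ≤ r) (hl : r - a ≤ l) :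
    l + 4 * (r ^ 2 - l ^ 2) ≤ l ^ 2 / 3 := by
  have hmono : 13 / 3 * (r - a) ^ 2 - (r - a) ≤ 13 / 3 * l ^ 2 - l := by nlinarith
  have hquad : 0 ≤ r * (r - (26 * a + 3)) := mul_nonneg (by linarith) (by linarith)
  nlinarith [sq_nonneg a]

lemma mul_add_one_add_mul_le (hk : 2 ≤ k) (hr : 8 * (k : ℝ) ^ 3 - 1 / 8 ≤ r)
    (hs : s ≤ 6 * (k - 1) * r) :
    (2 * (k : ℝ) - 1) * (2 * k - 1 + 1) + s * (2 * (2 * k - 1) + 1) ≤ 2 / 3 * r ^ 2 := by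
  obtain ⟨t, ht, hkt⟩ : ∃ t : ℝ, 0 ≤ t ∧ (k : ℝ) = t + 2 := by
    obtain ⟨t, rfl⟩ := Nat.exists_eq_add_of_le' hk
    exact ⟨t, Nat.cast_nonneg t, by push_cast; ring⟩
  rw [hkt] at hr hs ⊢
  have ht2 := pow_nonneg ht 2
  have ht3 := pow_nonneg ht 3
  have hlinear : 6 * (t + 1) * (4 * t + 7) + 1 / 4 ≤ 2 / 3 * r := by
    nlinarith [mul_nonneg ht (sq_nonneg (t - 1 / 8)), sq_nonneg (t - 1 / 8)]
  have hconst : (2 * t + 3) * (2 * t + 4) ≤ 1 / 4 * r := by nlinarith [ht2]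
  have hr1 : 0 ≤ r := by nlinarith
  calc _ ≤ 1 / 4 * r + 6 * (t + 1) * r * (4 * t + 7) := by
        linarith [hconst, mul_le_mul_of_nonneg_right hs (by linarith : 0 ≤ 4 * t + 7)]
    _ = (6 * (t + 1) * (4 * t + 7) + 1 / 4) * r := by ring
    _ ≤ 2 / 3 * r * r := mul_le_mul_of_nonneg_right hlinear hr1
    _ = 2 / 3 * r ^ 2 := by ring

lemma mul_mul_sq_lt_sq (hp : 0 < p) (hK : 16 * K ≤ p) (ha : 0 < a) (hb : 0 ≤ b)
    (h : p ^ 2 / 3 * b ≤ (p + K) * a) : p * K * b ^ 2 < a ^ 2 := by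
  have hpb : p * b ≤ 51 / 16 * a := by
    refine le_of_mul_le_mul_left ?_ hp
    nlinarith
  have : (p * b) ^ 2 ≤ (51 / 16 * a) ^ 2 := by gcongr
  nlinarith [mul_le_mul_of_nonneg_right hK (by positivity : 0 ≤ p * b ^ 2), pow_pos ha 2]

lemma add_one_mul_lt (hk : 1 ≤ k) (hh : h ≤ 2 * (k - 1) * (2 * k - 1)) :
    (h + 1) * (2 * k - 1) < 8 * (k : ℝ) ^ 3 - 1 / 8 := by
  have hk' : (1 : ℝ) ≤ k := by exact_mod_cast hk
  have : (h + 1) * (2 * (k : ℝ) - 1) ≤ (2 * (k - 1) * (2 * k - 1) + 1) * (2 * k - 1) :=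
    mul_le_mul_of_nonneg_right (by linarith) (by linarith)
  nlinarith

end Estimates

section Extremal

open Finset SimpleGraph

variable {V : Type*} [Fintype V] {G G' : SimpleGraph V} {k : ℕ} {u u' : V}

lemma codegree_le_of_not_hasEDC (hG : ¬ HasEDC G k) ⦃a b : V⦄ (hab : a ≠ b) :
    codegree G a b ≤ 2 * k - 1 :=
  Nat.le_sub_one_of_lt (codegree_lt_of_not_hasEDC hG hab)

lemma exists_degree_compl_le (hk : 1 ≤ k) (hn : 64 * k ^ 6 ≤ Fintype.card V)
    (hG : ¬ HasEDC G k) (hρ : √(Fintype.card V - 1) ≤ specRad G) :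
    ∃ u, (Gᶜ.degree u : ℝ) ≤ 6 * (k - 1) * √(Fintype.card V - 1) := by
  have hcard := one_lt_of_mul_pow_le hk hn
  have : Nonempty V := Fintype.card_pos_iff.1 (by omega)
  have hk' : (0 : ℝ) ≤ k - 1 := sub_nonneg.2 (by exact_mod_cast hk)
  have hsq : √((Fintype.card V : ℝ) - 1) ^ 2 = Fintype.card V - 1 :=
    Real.sq_sqrt (sub_nonneg.2 (by exact_mod_cast hcard.le))
  have hlarge := (mul_sub_one_add_le hk).trans (mul_cube_sub_le_sqrt hk hn)
  set r := √((Fintype.card V : ℝ) - 1)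
  obtain ⟨F, hFG, hF, hle⟩ := exists_isAcyclic_le_specRad hG
  obtain ⟨x, hx⟩ := exists_isNonnegEigenvector_specRad (G := F)
  obtain ⟨u, -, hu⟩ := exists_max_image univ x univ_nonempty
  have hlow : r - 2 * (k - 1) ≤ specRad F := by linarith
  have hstar := hx.degree_compl_le_of_isAcyclic hF (by linarith) (fun v => hu v (mem_univ v)) (by
    rw [← hsq]
    exact add_mul_sq_sub_sq_le (mul_nonneg zero_le_two hk') (by linarith) hlow)
  have hdiff : r ^ 2 - specRad F ^ 2 ≤ 2 * (k - 1) * (2 * r) := by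
    rcases le_total r (specRad F) with hr | hr
    · nlinarith [hr]
    · nlinarith [hr]
  refine ⟨u, ?_⟩
  calc (Gᶜ.degree u : ℝ) ≤ Fᶜ.degree u := by
        exact_mod_cast degree_le_of_le (compl_le_compl hFG)
    _ ≤ 3 / 2 * (r ^ 2 - specRad F ^ 2) := by rwa [hsq]
    _ ≤ 6 * (k - 1) * r := by linarith

lemma ecard_sub_le_of_isUniversal (hk : 1 ≤ k) (hG : ¬ HasEDC G k) (hu : G.IsUniversal u) :
    (ecard G : ℝ) - (Fintype.card V - 1) ≤ 2 * (k - 1) * (2 * k - 1) := by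
  obtain ⟨S, hcard, hS⟩ := exists_cover_of_not_hasEDC hG u
  have hsum := sum_codegree_le_of_cover (codegree_le_of_not_hasEDC hG) hS
  have hedges := two_mul_ecard_of_isUniversal hu
  have hSK : #S * (2 * k - 1) ≤ 2 * (k - 1) * (2 * k - 1) :=
    Nat.mul_le_mul_right _ (by omega)
  have hle : ecard G ≤ G.degree u + 2 * (k - 1) * (2 * k - 1) := by omega
  rw [← degree_of_isUniversal hu, sub_le_iff_le_add']
  have hcast : ((2 * k - 1 : ℕ) : ℝ) = 2 * k - 1 := by
    rw [Nat.cast_pred (by omega), Nat.cast_mul, Nat.cast_ofNat]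
  rw [← hcast, ← Nat.cast_pred hk]
  exact_mod_cast hle

lemma IsNonnegEigenvector.degree_compl_eq_zero [Nontrivial V] {K : ℕ} {μ : ℝ} {x : V → ℝ}
    (hx : IsNonnegEigenvector G μ x) (hμ : 0 < μ) (hK : ∀ ⦃a b⦄, a ≠ b → codegree G a b ≤ K)
    (hKμ : 16 * K ≤ μ) (hdeg : K * (K + 1) + Gᶜ.degree u * (2 * K + 1) ≤ 2 / 3 * μ ^ 2)
    (hrehang : specRad (rehang G u) ≤ μ) : Gᶜ.degree u = 0 := by
  obtain ⟨w, hwu, hw⟩ := exists_max_image (univ.erase u) x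
    ((exists_ne u).imp fun v hv => mem_erase.2 ⟨hv, mem_univ v⟩)
  have hmax : ∀ v, v ≠ u → x v ≤ x w := fun v hv => hw v (mem_erase.2 ⟨hv, mem_univ v⟩)
  have hsmall : μ ^ 2 / 3 * x w ≤ (μ + K) * x u := by
    have := hx.sq_mul_le_of_forall_ne_le hμ.le hK (ne_of_mem_erase hwu) hmax
    linarith [mul_le_mul_of_nonneg_right hdeg (hx.nonneg w)]
  have hxu : 0 < x u := hx.pos_of_forall_ne_mul_le (by positivity) fun v hv =>
    (mul_le_mul_of_nonneg_left (hmax v hv) (by positivity)).trans hsmall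
  have hgain := hx.degree_compl_mul_sq_le hμ hrehang hK (hx.nonneg w) hmax
  by_contra hne
  exact hgain.not_gt (mul_lt_mul_of_pos_left
    (mul_mul_sq_lt_sq hμ hKμ hxu (hx.nonneg w) hsmall)
    (by exact_mod_cast Nat.pos_of_ne_zero hne))

/-- `G` maximizes the spectral radius among the graphs on its vertex set that do not contain `k`
pairwise edge-disjoint cycles. -/
structure IsSpectralExtremal (G : SimpleGraph V) (k : ℕ) : Prop where
  not_hasEDC : ¬ HasEDC G k
  specRad_le : ∀ G' : SimpleGraph V, ¬ HasEDC G' k → specRad G' ≤ specRad G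

namespace IsSpectralExtremal

lemma sqrt_le_specRad [Nontrivial V] (hG : IsSpectralExtremal G k) (hk : 1 ≤ k) :
    √(Fintype.card V - 1) ≤ specRad G := by
  obtain ⟨u⟩ := ‹Nontrivial V›.to_nonempty
  exact (sqrt_le_specRad_of_isUniversal isUniversal_starGraph_self).trans (hG.specRad_le _
    (not_hasEDC_of_isAcyclic (isAcyclic_starGraph u) (Nat.one_le_iff_ne_zero.1 hk)))

lemma degree_compl_eq_zero [Nontrivial V] (hG : IsSpectralExtremal G k) (hk : 2 ≤ k)
    (hn : 64 * k ^ 6 ≤ Fintype.card V)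
    (hu : (Gᶜ.degree u : ℝ) ≤ 6 * (k - 1) * √(Fintype.card V - 1)) : Gᶜ.degree u = 0 := by
  have hk' : (2 : ℝ) ≤ k := by exact_mod_cast hk
  have hr := mul_cube_sub_le_sqrt (one_le_two.trans hk) hn
  have hrρ := hG.sqrt_le_specRad (one_le_two.trans hk)
  have hcast : ((2 * k - 1 : ℕ) : ℝ) = 2 * k - 1 := by
    rw [Nat.cast_pred (by omega), Nat.cast_mul, Nat.cast_ofNat]
  have hKρ : 16 * (2 * (k : ℝ) - 1) ≤ specRad G := by
    nlinarith [mul_nonneg (sub_nonneg.2 hk') (sub_nonneg.2 hk')]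
  obtain ⟨x, hx⟩ := exists_isNonnegEigenvector_specRad (G := G)
  refine hx.degree_compl_eq_zero (by linarith) (codegree_le_of_not_hasEDC hG.not_hasEDC)
    (by rwa [hcast]) ?_ (hG.specRad_le _ fun h => hG.not_hasEDC h.of_rehang)
  calc _ ≤ 2 / 3 * √((Fintype.card V : ℝ) - 1) ^ 2 := by
        rw [hcast]
        exact mul_add_one_add_mul_le hk hr hu
    _ ≤ 2 / 3 * specRad G ^ 2 := by gcongr

lemma exists_isUniversal (hG : IsSpectralExtremal G k) (hk : 1 ≤ k)
    (hn : 64 * k ^ 6 ≤ Fintype.card V) : ∃ u, G.IsUniversal u := by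
  have : Nontrivial V := Fintype.one_lt_card_iff_nontrivial.1 (one_lt_of_mul_pow_le hk hn)
  obtain ⟨u, hu⟩ := exists_degree_compl_le hk hn hG.not_hasEDC (hG.sqrt_le_specRad hk)
  refine ⟨u, degree_compl_eq_zero_iff.1 ?_⟩
  rcases hk.eq_or_lt with rfl | hk2
  · rw [Nat.cast_one, sub_self, mul_zero, zero_mul] at hu
    exact_mod_cast hu.antisymm (Nat.cast_nonneg _)
  · exact hG.degree_compl_eq_zero hk2 hn hu

lemma ecard_le (hG : IsSpectralExtremal G k) (hk : 1 ≤ k) (hn : 64 * k ^ 6 ≤ Fintype.card V)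
    (hu : G.IsUniversal u) (hG' : ¬ HasEDC G' k) (hu' : G'.IsUniversal u') :
    ecard G' ≤ ecard G := by
  have : Nontrivial V := Fintype.one_lt_card_iff_nontrivial.1 (one_lt_of_mul_pow_le hk hn)
  obtain ⟨x, hx⟩ := exists_isNonnegEigenvector_specRad (G := G)
  refine hx.ecard_le_of_isUniversal hu (codegree_le_of_not_hasEDC hG.not_hasEDC) ?_ hu'
    (hG.specRad_le G' hG')
  rw [Nat.cast_pred (by omega), Nat.cast_mul, Nat.cast_ofNat]
  exact (add_one_mul_lt hk (ecard_sub_le_of_isUniversal hk hG.not_hasEDC hu)).trans_le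
    ((mul_cube_sub_le_sqrt hk hn).trans (hG.sqrt_le_specRad hk))

end IsSpectralExtremal

end Extremal

/-- For `k ≥ 1` and `n ≥ 64k⁶`, a spectral-extremal graph among all `n`-vertex graphs
without `k` pairwise edge-disjoint cycles has a dominating vertex and is also
edge-extremal among `n`-vertex graphs with a dominating vertex and without `k`
pairwise edge-disjoint cycles. -/
theorem spectral_extremal_is_edge_extremal (k n : ℕ) (hk : 1 ≤ k)
    (hn : 64 * k ^ 6 ≤ n) {V : Type*} [Fintype V] (hV : Fintype.card V = n)
    (G : SimpleGraph V) (hG : phi G ≤ k - 1)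
    (hmax : ∀ G' : SimpleGraph V, phi G' ≤ k - 1 → specRad G' ≤ specRad G) :
    (∃ u : V, ∀ v, v ≠ u → G.Adj u v) ∧
    ∀ G' : SimpleGraph V, (∃ u : V, ∀ v, v ≠ u → G'.Adj u v) → phi G' ≤ k - 1 →
      ecard G' ≤ ecard G := by
  subst hV
  have hphi : ∀ G' : SimpleGraph V, phi G' ≤ k - 1 ↔ ¬ HasEDC G' k := fun G' =>
    (Nat.le_sub_one_iff_lt hk).trans phi_lt_iff
  have hext : IsSpectralExtremal G k :=
    ⟨(hphi G).1 hG, fun G' hG' => hmax G' ((hphi G').2 hG')⟩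
  obtain ⟨u, hu⟩ := hext.exists_isUniversal hk hn
  refine ⟨⟨u, fun v hv => hu hv.symm⟩, ?_⟩
  rintro G' ⟨u', hu'⟩ hG'
  exact hext.ecard_le hk hn hu ((hphi G').1 hG') fun v hv => hu' v hv.symm

end PaperEDC
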